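/- arXiv:1710.04680 — 2 statements merged into one kernel-verified Lean document; each statement's English description precedes it below -/
import Mathlib

section
/- Let k ≥ 4 be an even integer and let n ≥ k. Then there exist three permutations σ₁, σ₂, σ₃ in the symmetric group Σ_n, each of order exactly k, such that the subgroup they generate is all of Σ_n. -/
/-!
Let `c` be the `k`-cycle `(0 1 … k-1)`. Since `k` is even, `c²` is a product of two `k/2`-cycles,
which multiplication by the transposition `τ = (0 1)` merges into a single `k`-cycle. Hence, for an
involution `s` of the points `k, …, n-1`, both `σ = c s` and `σ² τ = c² τ` have order `k`, and the
group generated by them contains `τ`. As third generator take a conjugate `ρ` of `σ` which sends `0`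
to `1`, as `σ` does, and such that `σ` and `ρ` generate a transitive group; reversing the points
`k, …, n-1` for `s` and conjugating by the reversal of `k-1, …, n-1` achieves this.

Having `(x y)` in the group is then an equivalence relation between `x` and `y`,
and the class of `0` is preserved by `σ` and `ρ`, so all transpositions are in the group.
-/

open Equiv Equiv.Perm MulAction
open scoped Pointwise

theorem isPretransitive_of_exists_lt_smul_eq {G α : Type*} [Group G] [MulAction G α] [LT α]
    [WellFoundedLT α] (a : α) (h : ∀ x ≠ a, ∃ g : G, ∃ y < x, g • y = x) : IsPretransitive G α := by
  refine (isPretransitive_iff_orbit_eq_univ a).2 (Set.eq_univ_of_forall fun x ↦ ?_)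
  induction x using WellFoundedLT.induction with
  | ind x ih =>
    obtain rfl | hx := eq_or_ne x a
    · exact mem_orbit_self x
    · obtain ⟨g, y, hyx, rfl⟩ := h x hx
      exact mem_orbit_of_mem_orbit g (ih y hyx)

section SwapMem

variable {α : Type*} [DecidableEq α] {G : Subgroup (Perm α)} {a b : α}

theorem swap_mem_apply_iff {g : Perm α} (hg : g ∈ G) (hab : swap a b ∈ G) (hgab : g a = b) (x : α) :
    swap a (g x) ∈ G ↔ swap a x ∈ G := by
  have hconj : swap b (g x) ∈ G ↔ swap a x ∈ G := by
    rw [← hgab, swap_apply_apply, G.mul_mem_cancel_right (inv_mem hg), G.mul_mem_cancel_left hg]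
  rw [← hconj]
  exact ⟨SubmonoidClass.swap_mem_trans G (swap_comm a b ▸ hab),
    SubmonoidClass.swap_mem_trans G hab⟩

theorem eq_top_of_forall_swap_mem [Finite α] (h : ∀ x, swap a x ∈ G) : G = ⊤ := by
  rw [eq_top_iff, ← closure_isSwap, Subgroup.closure_le]
  rintro _ ⟨x, y, -, rfl⟩
  exact SubmonoidClass.swap_mem_trans G (swap_comm a x ▸ h x) (h y)

theorem eq_top_of_swap_mem_of_isPretransitive_closure [Finite α] {S : Set (Perm α)}
    [IsPretransitive (Subgroup.closure S) α] (hSG : S ⊆ G) (hab : swap a b ∈ G)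
    (hS : ∀ g ∈ S, g a = b) : G = ⊤ := by
  have hstab : Subgroup.closure S ≤ stabilizer (Perm α) {x | swap a x ∈ G} := by
    rw [Subgroup.closure_le]
    exact fun g hg ↦ mem_stabilizer_set.2 (swap_mem_apply_iff (hSG hg) hab (hS g hg))
  refine eq_top_of_forall_swap_mem (a := a) fun x ↦ ?_
  obtain ⟨g, rfl⟩ := exists_smul_eq (Subgroup.closure S) a x
  refine (mem_stabilizer_set.1 (hstab g.2) a).2 ?_
  simp [← Perm.one_def, one_mem]

end SwapMem

section CycleOfEvenOrder

variable {α : Type*} {c : Perm α} {x : α}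

theorem even_of_isCycle_of_pow_apply_eq [Finite α] (hc : c.IsCycle) (heven : Even (orderOf c))
    (hx : c x ≠ x) {i : ℕ} (hi : (c ^ i) x = x) : Even i :=
  even_iff_two_dvd.2 <| heven.two_dvd.trans <|
    orderOf_dvd_of_pow_eq_one ((hc.pow_eq_one_iff' hx).2 hi)

theorem sq_mul_swap_apply_of_ne [DecidableEq α] {y : α} (hyx : y ≠ x) (hyc : y ≠ c x) :
    (c ^ 2 * swap x (c x)) y = (c ^ 2) y := by
  rw [Perm.mul_apply, swap_apply_of_ne_of_ne hyx hyc]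

theorem sameCycle_sq_mul_swap_apply_self [Finite α] [DecidableEq α] (hc : c.IsCycle)
    (heven : Even (orderOf c)) (hx : c x ≠ x) : (c ^ 2 * swap x (c x)).SameCycle (c x) x := by
  by_contra hnot
  have hpow (j : ℕ) : (c ^ 2 * swap x (c x)).SameCycle (c x) ((c ^ (2 * (j + 1))) x) := by
    induction j with
    | zero => exact ⟨1, by simp⟩
    | succ j ih =>
      have hne : (c ^ (2 * (j + 1))) x ≠ x := fun h ↦ hnot (by rwa [h] at ih)
      have hne' : (c ^ (2 * (j + 1))) x ≠ c x := fun h ↦ by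
        rw [show 2 * (j + 1) = 2 * j + 1 + 1 by ring, pow_succ', Perm.mul_apply,
          c.apply_eq_iff_eq] at h
        exact Nat.not_even_two_mul_add_one j (even_of_isCycle_of_pow_apply_eq hc heven hx h)
      have hstep := ih.apply_right
      rwa [sq_mul_swap_apply_of_ne hne hne', ← Perm.mul_apply, ← pow_add, add_comm] at hstep
  obtain ⟨m, hm⟩ := heven.two_dvd
  obtain ⟨j, rfl⟩ : ∃ j, m = j + 1 := Nat.exists_eq_succ_of_ne_zero fun h ↦
    (orderOf_pos c).ne' (by rw [hm, h, mul_zero])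
  have hlast := hpow j
  rw [← hm, pow_orderOf_eq_one] at hlast
  exact hnot hlast

theorem sameCycle_sq_mul_swap_sq_apply [Finite α] [DecidableEq α] (hc : c.IsCycle)
    (heven : Even (orderOf c)) (hx : c x ≠ x) (y : α) :
    (c ^ 2 * swap x (c x)).SameCycle y ((c ^ 2) y) := by
  have hmerge := sameCycle_sq_mul_swap_apply_self hc heven hx
  obtain rfl | hyx := eq_or_ne y x
  · exact hmerge.symm.trans ⟨1, by simp⟩
  obtain rfl | hyc := eq_or_ne y (c x)
  · exact hmerge.trans ⟨1, by simp⟩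
  · exact ⟨1, by rw [zpow_one, sq_mul_swap_apply_of_ne hyx hyc]⟩

theorem sameCycle_sq_mul_swap_pow_apply [Finite α] [DecidableEq α] (hc : c.IsCycle)
    (heven : Even (orderOf c)) (hx : c x ≠ x) (i : ℕ) :
    (c ^ 2 * swap x (c x)).SameCycle x ((c ^ i) x) := by
  induction i using Nat.twoStepInduction with
  | zero => exact SameCycle.refl _ _
  | one => exact (sameCycle_sq_mul_swap_apply_self hc heven hx).symm
  | more i ih _ =>
    rw [add_comm, pow_add]
    exact ih.trans (sameCycle_sq_mul_swap_sq_apply hc heven hx _)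

theorem sq_mul_swap_apply_ne_self_iff [Finite α] [DecidableEq α] (hc : c.IsCycle)
    (heven : Even (orderOf c)) (hx : c x ≠ x) {y : α} :
    (c ^ 2 * swap x (c x)) y ≠ y ↔ c y ≠ y := by
  refine ⟨fun hy hcy ↦ hy ?_, fun hcy hy ↦ ?_⟩
  · have hyx : y ≠ x := by rintro rfl; exact hx hcy
    have hyc : y ≠ c x := by rintro rfl; exact hx (c.injective hcy)
    rw [sq_mul_swap_apply_of_ne hyx hyc, pow_apply_eq_self_of_apply_eq_self hcy]
  · obtain ⟨i, rfl⟩ := hc.exists_pow_eq hx hcy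
    have hfix := (sameCycle_sq_mul_swap_pow_apply hc heven hx i).apply_eq_self_iff.2 hy
    have hcube : (c ^ 3) x = x := by
      rwa [Perm.mul_apply, swap_apply_left, ← Perm.mul_apply, ← pow_succ] at hfix
    exact absurd (even_of_isCycle_of_pow_apply_eq hc heven hx hcube) (by decide)

theorem isCycle_sq_mul_swap [Finite α] [DecidableEq α] (hc : c.IsCycle)
    (heven : Even (orderOf c)) (hx : c x ≠ x) : (c ^ 2 * swap x (c x)).IsCycle := by
  refine ⟨x, (sq_mul_swap_apply_ne_self_iff hc heven hx).2 hx, fun y hy ↦ ?_⟩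
  obtain ⟨i, rfl⟩ := hc.exists_pow_eq hx ((sq_mul_swap_apply_ne_self_iff hc heven hx).1 hy)
  exact sameCycle_sq_mul_swap_pow_apply hc heven hx i

theorem orderOf_sq_mul_swap [Finite α] [DecidableEq α] (hc : c.IsCycle)
    (heven : Even (orderOf c)) (hx : c x ≠ x) :
    orderOf (c ^ 2 * swap x (c x)) = orderOf c := by
  have := Fintype.ofFinite α
  rw [(isCycle_sq_mul_swap hc heven hx).orderOf, hc.orderOf]
  congr 1
  ext y
  simp only [mem_support, sq_mul_swap_apply_ne_self_iff hc heven hx]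

end CycleOfEvenOrder

section ReverseFrom

variable {n m : ℕ} {x : Fin n}

/-- The involution of `Fin n` that reverses the order of the points `m, …, n - 1` and fixes all
points below `m`. -/
def reverseFrom (n m : ℕ) : Perm (Fin n) :=
  Function.Involutive.toPerm
    (fun x ↦ if h : (x : ℕ) < m then x else ⟨n - 1 + m - x, by omega⟩) fun x ↦ by grind

theorem reverseFrom_of_lt (hx : (x : ℕ) < m) : reverseFrom n m x = x :=
  dif_pos hx

theorem val_reverseFrom_of_le (hx : m ≤ (x : ℕ)) : (reverseFrom n m x : ℕ) = n - 1 + m - x :=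
  congrArg Fin.val (dif_neg hx.not_gt)

theorem reverseFrom_inv : (reverseFrom n m)⁻¹ = reverseFrom n m :=
  rfl

theorem reverseFrom_sq : reverseFrom n m ^ 2 = 1 := by
  rw [sq, mul_eq_one_iff_eq_inv, reverseFrom_inv]

end ReverseFrom

section Generators

variable {n : ℕ} {i x : Fin n}

/-- The permutation `σ = c s` of `Fin n`, where `c` is the cycle `(0 1 … i)` and `s` reverses
`i + 1, …, n - 1`. -/
def cycleReverse (i : Fin n) : Perm (Fin n) :=
  i.cycleRange * reverseFrom n (i + 1)

/-- The conjugate `ρ` of `cycleReverse i` by the reversal of `i, …, n - 1`. -/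
def conjCycleReverse (i : Fin n) : Perm (Fin n) :=
  reverseFrom n i * cycleReverse i * (reverseFrom n i)⁻¹

theorem cycleReverse_of_le (hx : x ≤ i) : cycleReverse i x = i.cycleRange x := by
  rw [cycleReverse, Perm.mul_apply, reverseFrom_of_lt (by omega)]

theorem val_cycleReverse_of_lt (hx : x < i) : (cycleReverse i x : ℕ) = x + 1 := by
  rw [cycleReverse_of_le hx.le, Fin.coe_cycleRange_of_lt hx]

theorem val_cycleReverse_of_gt (hx : i < x) : (cycleReverse i x : ℕ) = n + i - x := by
  have hval : (reverseFrom n (i + 1) x : ℕ) = n - 1 + (i + 1) - x := val_reverseFrom_of_le hx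
  rw [cycleReverse, Perm.mul_apply, Fin.cycleRange_of_gt (by omega), hval]
  omega

theorem conjCycleReverse_apply :
    conjCycleReverse i x = reverseFrom n i (cycleReverse i (reverseFrom n i x)) :=
  rfl

theorem val_conjCycleReverse_of_add_one_lt (hx : (x : ℕ) + 1 < i) :
    (conjCycleReverse i x : ℕ) = x + 1 := by
  have hval : (cycleReverse i x : ℕ) = x + 1 := val_cycleReverse_of_lt (by omega)
  rw [conjCycleReverse_apply, reverseFrom_of_lt (x := x) (by omega), reverseFrom_of_lt (by omega),
    hval]

theorem val_conjCycleReverse_of_le_add_one (hx : (i : ℕ) ≤ x + 1) (hxn : (x : ℕ) + 1 < n) :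
    (conjCycleReverse i x : ℕ) = n + i - (x + 2) := by
  rw [conjCycleReverse_apply]
  obtain hxi | hxi := hx.eq_or_lt
  · have hval : (cycleReverse i x : ℕ) = x + 1 := val_cycleReverse_of_lt (by omega)
    rw [reverseFrom_of_lt (x := x) (by omega), val_reverseFrom_of_le (by omega)]
    omega
  · have hrev : (reverseFrom n i x : ℕ) = n - 1 + i - x := val_reverseFrom_of_le (by omega)
    have hval : (cycleReverse i (reverseFrom n i x) : ℕ) = n + i - reverseFrom n i x :=
      val_cycleReverse_of_gt (by omega)
    rw [val_reverseFrom_of_le (by omega)]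
    omega

theorem val_cycleReverse_conjCycleReverse (hx : (i : ℕ) ≤ x + 1) (hxn : (x : ℕ) + 2 < n) :
    (cycleReverse i (conjCycleReverse i x) : ℕ) = x + 2 := by
  have hval := val_conjCycleReverse_of_le_add_one hx (by omega)
  rw [val_cycleReverse_of_gt (by omega)]
  omega

theorem isPretransitive_closure_cycleReverse (hi : 0 < (i : ℕ)) :
    IsPretransitive (Subgroup.closure {cycleReverse i, conjCycleReverse i}) (Fin n) := by
  have hσ : cycleReverse i ∈ Subgroup.closure {cycleReverse i, conjCycleReverse i} :=
    Subgroup.subset_closure (Set.mem_insert _ _)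
  have hρ : conjCycleReverse i ∈ Subgroup.closure {cycleReverse i, conjCycleReverse i} :=
    Subgroup.subset_closure (Set.mem_insert_of_mem _ rfl)
  refine isPretransitive_of_exists_lt_smul_eq ⟨0, i.pos⟩ fun x hx ↦ ?_
  have hx0 : (x : ℕ) ≠ 0 := Fin.val_ne_of_ne hx
  obtain hxi | hix := le_or_gt x i
  · obtain ⟨y, hyx⟩ : ∃ y : Fin n, (y : ℕ) + 1 = x := ⟨⟨x - 1, by omega⟩, by grind⟩
    exact ⟨⟨_, hσ⟩, y, by omega, Fin.ext ((val_cycleReverse_of_lt (by omega)).trans hyx)⟩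
  · obtain ⟨y, hyx⟩ : ∃ y : Fin n, (y : ℕ) + 2 = x := ⟨⟨x - 2, by omega⟩, by grind⟩
    exact ⟨⟨_, mul_mem hσ hρ⟩, y, by omega,
      Fin.ext ((val_cycleReverse_conjCycleReverse (by omega) (by omega)).trans hyx)⟩

theorem disjoint_cycleRange_reverseFrom : i.cycleRange.Disjoint (reverseFrom n (i + 1)) := by
  intro x
  obtain hx | hx := le_or_gt x i
  · exact Or.inr (reverseFrom_of_lt (by omega))
  · exact Or.inl (Fin.cycleRange_of_gt hx)

theorem orderOf_cycleRange : orderOf i.cycleRange = i + 1 := by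
  have : NeZero n := .of_pos i.pos
  obtain rfl | hi := eq_or_ne i 0
  · simp
  rw [← lcm_cycleType, Fin.cycleType_cycleRange hi, Multiset.lcm_singleton, normalize_eq]

theorem orderOf_cycleReverse (heven : Even ((i : ℕ) + 1)) :
    orderOf (cycleReverse i) = i + 1 := by
  rw [cycleReverse, disjoint_cycleRange_reverseFrom.orderOf, orderOf_cycleRange]
  exact Nat.lcm_eq_left ((orderOf_dvd_of_pow_eq_one reverseFrom_sq).trans heven.two_dvd)

theorem cycleReverse_sq : cycleReverse i ^ 2 = i.cycleRange ^ 2 := by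
  rw [cycleReverse, disjoint_cycleRange_reverseFrom.commute.mul_pow, reverseFrom_sq, mul_one]

theorem orderOf_cycleReverse_sq_mul_swap [NeZero n] (heven : Even ((i : ℕ) + 1)) :
    orderOf (cycleReverse i ^ 2 * swap 0 (cycleReverse i 0)) = i + 1 := by
  have hi : i ≠ 0 := by rintro rfl; simp at heven
  have hmove : i.cycleRange 0 ≠ 0 := by
    rw [← Fin.val_ne_zero_iff, Fin.coe_cycleRange_of_lt (Fin.pos_iff_ne_zero.2 hi)]
    exact Nat.succ_ne_zero _
  have horder := orderOf_cycleRange (i := i)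
  rw [cycleReverse_sq, cycleReverse_of_le (Fin.zero_le i),
    orderOf_sq_mul_swap (Fin.isCycle_cycleRange hi) (horder ▸ heven) hmove, horder]

theorem orderOf_conjCycleReverse : orderOf (conjCycleReverse i) = orderOf (cycleReverse i) :=
  (MulAut.conj (reverseFrom n i)).orderOf_eq (cycleReverse i)

theorem conjCycleReverse_zero [NeZero n] (hi : 1 < (i : ℕ)) :
    conjCycleReverse i 0 = cycleReverse i 0 := by
  refine Fin.ext ?_
  rw [val_conjCycleReverse_of_add_one_lt (by simpa using hi),
    val_cycleReverse_of_lt (Fin.lt_def.2 (by rw [Fin.val_zero]; omega))]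

theorem closure_cycleReverse_sq_mul_swap_conjCycleReverse [NeZero n] (hi : 1 < (i : ℕ)) :
    Subgroup.closure {cycleReverse i, cycleReverse i ^ 2 * swap 0 (cycleReverse i 0),
      conjCycleReverse i} = ⊤ := by
  set G := Subgroup.closure {cycleReverse i, cycleReverse i ^ 2 * swap 0 (cycleReverse i 0),
    conjCycleReverse i}
  have hσ : cycleReverse i ∈ G := Subgroup.subset_closure (by simp)
  have hρ : conjCycleReverse i ∈ G := Subgroup.subset_closure (by simp)
  have hswap : swap 0 (cycleReverse i 0) ∈ G :=
    (G.mul_mem_cancel_left (pow_mem hσ 2)).1 (Subgroup.subset_closure (by simp))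
  have := isPretransitive_closure_cycleReverse (i := i) (by omega)
  refine eq_top_of_swap_mem_of_isPretransitive_closure (S := {cycleReverse i, conjCycleReverse i})
    (Set.pair_subset hσ hρ) hswap ?_
  rintro g (rfl | rfl)
  exacts [rfl, conjCycleReverse_zero hi]

end Generators

/-- For any even `k ≥ 4` and `n ≥ k`, the symmetric group on `n` symbols is
generated by three elements of order exactly `k`. -/
theorem symmetric_group_generated_by_three_elements_of_even_order
    (k n : ℕ) (hk : 4 ≤ k) (hke : Even k) (hn : k ≤ n) :
    ∃ σ₁ σ₂ σ₃ : Equiv.Perm (Fin n),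
      orderOf σ₁ = k ∧ orderOf σ₂ = k ∧ orderOf σ₃ = k ∧
      Subgroup.closure {σ₁, σ₂, σ₃} = ⊤ := by
  have : NeZero n := ⟨by omega⟩
  obtain ⟨i, rfl⟩ : ∃ i : Fin n, (i : ℕ) + 1 = k := ⟨⟨k - 1, by omega⟩, by grind⟩
  have hσ := orderOf_cycleReverse hke
  exact ⟨cycleReverse i, cycleReverse i ^ 2 * swap 0 (cycleReverse i 0), conjCycleReverse i, hσ,
    orderOf_cycleReverse_sq_mul_swap hke, orderOf_conjCycleReverse.trans hσ,
    closure_cycleReverse_sq_mul_swap_conjCycleReverse (by omega)⟩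
end

section
/- Let k ≥ 3 be an odd integer and let n ≥ k. Then there exist three permutations σ₁, σ₂, σ₃ in the alternating group A_n, each of order exactly k, such that the subgroup they generate is all of A_n. -/
/-!
A primitive permutation group containing a 3-cycle contains the alternating group (Jordan), so it
suffices to find generators of order `k` whose group is primitive and contains a 3-cycle.

If `a`, `f a` and `f (f a)` are distinct and `e` is the conjugate of `f` by the transposition of `a`
and `f a`, then `τ = e * f⁻¹` is a 3-cycle on these points. A block of imprimitivity that has at
least two points, one of them moved by `τ`, contains all points moved by `τ`. So if each generator
maps some point moved by `τ` to a point moved by `τ`, then it preserves such a block, which is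
therefore everything when the group is transitive.

It remains to find `f` and `g` of order `k` generating a transitive group. On `{0, …, n - 1}` let
`f` rotate the consecutive blocks of length `k` starting at `0` and let `g` do the same from another
starting point `s`, chosen such that any two neighbours lie in a common block of `f` or of `g`:
`s = n % k` works if `k ∤ n`, and `s = 1` if `n` is a proper multiple of `k`.
-/

open Equiv Equiv.Perm MulAction Subgroup
open scoped Pointwise

theorem mem_alternatingGroup_of_odd_orderOf {α : Type*} [Fintype α] [DecidableEq α] {σ : Perm α}
    (hσ : Odd (orderOf σ)) : σ ∈ alternatingGroup α := by
  have sign_pow : sign σ ^ orderOf σ = 1 := by rw [← map_pow, pow_orderOf_eq_one, map_one]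
  rcases Int.units_eq_one_or (sign σ) with h | h
  · exact h
  · rw [h, hσ.neg_one_pow] at sign_pow
    exact absurd sign_pow (by decide)

theorem closure_eq_top_of_le_closure_image {G : Type*} [Group G] {H : Subgroup G} {S : Set H}
    (h : H ≤ closure (H.subtype '' S)) : closure S = ⊤ := by
  refine map_injective H.subtype_injective (le_antisymm (map_mono le_top) ?_)
  rwa [MonoidHom.map_closure, ← MonoidHom.range_eq_map, range_subtype]

theorem mem_zpowers_zpow_of_prime_orderOf {G : Type*} [Group G] {g : G} (hg : (orderOf g).Prime)
    {i : ℤ} (hi : g ^ i ≠ 1) : g ∈ zpowers (g ^ i) := by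
  rw [mem_zpowers_zpow_iff, Int.gcd_comm, ← Int.isCoprime_iff_gcd_eq_one,
    (Nat.prime_iff_prime_int.mp hg).coprime_iff_not_dvd, orderOf_dvd_iff_zpow_eq_one]
  exact hi

section Primitivity

variable {α : Type*}

theorem smul_eq_of_isBlock_of_apply_mem {G : Subgroup (Perm α)} {B : Set α} (hB : IsBlock G B)
    {σ : Perm α} (hσ : σ ∈ G) {x : α} (hx : x ∈ B) (hσx : σ x ∈ B) : σ • B = B :=
  isBlock_iff_smul_eq_of_mem.mp hB (g := ⟨σ, hσ⟩) hx hσx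

theorem mem_of_isBlock_of_isCycle {G : Subgroup (Perm α)} {B : Set α} (hB : IsBlock G B)
    (hB₂ : B.Nontrivial) {τ : Perm α} (hτ : τ.IsCycle) (hp : (orderOf τ).Prime) (hτG : τ ∈ G)
    {a x : α} (ha : a ∈ B) (hτa : τ a ≠ a) (hτx : τ x ≠ x) : x ∈ B := by
  obtain ⟨b, hb, hba⟩ := hB₂.exists_ne a
  have hτB : τ ∈ stabilizer (Perm α) B := by
    by_cases hτb : τ b = b
    · exact smul_eq_of_isBlock_of_apply_mem hB hτG hb (by rwa [hτb])
    · obtain ⟨i, rfl⟩ := hτ.sameCycle hτa hτb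
      have hi : τ ^ i ∈ stabilizer (Perm α) B :=
        smul_eq_of_isBlock_of_apply_mem hB (zpow_mem hτG i) ha hb
      have hi₁ : τ ^ i ≠ 1 := fun h ↦ hba (by rw [h, one_apply])
      exact (zpowers_le.mpr hi) (mem_zpowers_zpow_of_prime_orderOf hp hi₁)
  obtain ⟨i, rfl⟩ := hτ.sameCycle hτa hτx
  exact mem_stabilizer_set.mp (zpow_mem hτB i) a |>.mpr ha

theorem eq_univ_of_forall_smul_eq {S : Set (Perm α)} [IsPretransitive (closure S) α]
    {B : Set α} (hB : B.Nonempty) (hS : ∀ s ∈ S, s • B = B) : B = Set.univ := by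
  obtain ⟨a, ha⟩ := hB
  have hle : closure S ≤ stabilizer (Perm α) B := (closure_le _).mpr hS
  refine Set.eq_univ_of_forall fun x ↦ ?_
  obtain ⟨g, rfl⟩ := exists_smul_eq (closure S) a x
  exact (mem_stabilizer_set.mp (hle g.2) a).mpr ha

theorem isPreprimitive_closure_of_isCycle {S : Set (Perm α)} [IsPretransitive (closure S) α]
    {τ : Perm α} (hτ : τ.IsCycle) (hp : (orderOf τ).Prime) (hτS : τ ∈ closure S)
    (hS : ∀ s ∈ S, ∃ x, τ x ≠ x ∧ τ (s x) ≠ s x) : IsPreprimitive (closure S) α := by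
  obtain ⟨a, hτa, -⟩ := id hτ
  refine .of_isTrivialBlock_base a fun {B} ha hB ↦ ?_
  refine B.subsingleton_or_nontrivial.imp_right fun hB₂ ↦ ?_
  have mem_of_moved {x : α} (hx : τ x ≠ x) : x ∈ B :=
    mem_of_isBlock_of_isCycle hB hB₂ hτ hp hτS ha hτa hx
  refine eq_univ_of_forall_smul_eq (S := S) ⟨a, ha⟩ fun s hs ↦ ?_
  obtain ⟨x, hx, hsx⟩ := hS s hs
  exact smul_eq_of_isBlock_of_apply_mem hB (subset_closure hs) (mem_of_moved hx) (mem_of_moved hsx)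

end Primitivity

section ThreeGenerators

variable {α : Type*} [DecidableEq α]

theorem conj_swap_mul_inv_eq (f : Perm α) (a b : α) :
    MulAut.conj (swap a b) f * f⁻¹ = swap a b * swap (f a) (f b) := by
  rw [MulAut.conj_apply, swap_inv, swap_apply_apply]
  group

variable [Fintype α]

theorem isThreeCycle_swap_mul_swap {a b c : α} (hab : a ≠ b) (hac : a ≠ c) (hbc : b ≠ c) :
    (swap a b * swap b c).IsThreeCycle := by
  rw [swap_comm a b]
  exact isThreeCycle_swap_mul_swap_same hab.symm hbc hac

theorem alternatingGroup_le_closure_conj_swap {f g : Perm α}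
    [IsPretransitive (closure {f, g}) α] {a : α} (hfa : f a ≠ a) (hffa : f (f a) ≠ a)
    (hga : g a = a ∨ g a = f a) :
    alternatingGroup α ≤ closure {f, MulAut.conj (swap a (f a)) f, g} := by
  set e := MulAut.conj (swap a (f a)) f with he
  set τ := swap a (f a) * swap (f a) (f (f a)) with hτ_def
  have hffa' : f a ≠ f (f a) := fun h ↦ hfa (f.injective h).symm
  have hτ : τ.IsThreeCycle := isThreeCycle_swap_mul_swap hfa.symm hffa.symm hffa'
  have moved_iff (x : α) : τ x ≠ x ↔ x = a ∨ x = f a ∨ x = f (f a) := by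
    rw [← mem_support, support_swap_mul_swap (by simp [hfa.symm, hffa.symm, hffa'])]
    simp
  have hτ_mem : τ ∈ closure {f, e, g} := by
    rw [hτ_def, ← conj_swap_mul_inv_eq]
    exact mul_mem (subset_closure (by simp [he])) (inv_mem (subset_closure (by simp)))
  have he_apply : e (f a) = a := by simp [he]
  have : IsPretransitive (closure {f, e, g}) α :=
    .of_smul_eq (inclusion (closure_mono (Set.insert_subset_insert (Set.subset_insert e {g})))) rfl
  have hprim : IsPreprimitive (closure {f, e, g}) α := by
    refine isPreprimitive_closure_of_isCycle hτ.isCycle (hτ.orderOf ▸ Nat.prime_three) hτ_mem ?_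
    simp only [moved_iff]
    rintro s (rfl | rfl | rfl)
    · exact ⟨a, .inl rfl, .inr (.inl rfl)⟩
    · exact ⟨f a, .inr (.inl rfl), .inl he_apply⟩
    · exact ⟨a, .inl rfl, hga.imp_right .inl⟩
  exact alternatingGroup_le_of_isPreprimitive_of_isThreeCycle_mem hprim hτ hτ_mem

end ThreeGenerators

section BlockRotation

theorem orderOf_finRotate {k : ℕ} (hk : 0 < k) : orderOf (finRotate k) = k := by
  obtain rfl | hk₂ : k = 1 ∨ 2 ≤ k := by lia
  · rw [finRotate_one, ← Perm.one_def, orderOf_one]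
  · rw [(isCycle_finRotate_of_le hk₂).orderOf, support_finRotate_of_le hk₂, Finset.card_univ,
      Fintype.card_fin]

theorem orderOf_prodCongr_refl {α β : Type*} [Nonempty α] (σ : Perm β) :
    orderOf (prodCongr (Equiv.refl α) σ : Perm (α × β)) = orderOf σ := by
  have pow_eq (i : ℕ) : (prodCongr (Equiv.refl α) σ : Perm (α × β)) ^ i =
      prodCongr (Equiv.refl α) (σ ^ i) := by
    induction i with
    | zero => rfl
    | succ i ih => rw [pow_succ, ih, pow_succ]; rfl
  rw [orderOf_eq_orderOf_iff]
  intro i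
  rw [pow_eq]
  simp [Equiv.ext_iff]

variable {k s m n : ℕ}

/-- Among the `m` consecutive blocks of length `k` starting at `s`, some block contains both `t - 1`
and `t`. The truncated subtraction `t - s` is guarded by `s < t`. -/
def PredInSameBlock (k s m t : ℕ) : Prop := s < t ∧ t < s + m * k ∧ ¬ k ∣ t - s

/-- The enumeration `(i, j) ↦ s + (k * i + j)` of `m` consecutive blocks of length `k` in `Fin n`,
the first of which starts at `s`. -/
def blockEmbedding (h : s + m * k ≤ n) : Fin m × Fin k ↪ Fin n :=
  finProdFinEquiv.toEmbedding.trans ((Fin.natAddEmb s).trans (Fin.castLEEmb h))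

theorem val_blockEmbedding (h : s + m * k ≤ n) (p : Fin m × Fin k) :
    (blockEmbedding h p : ℕ) = s + (p.2 + k * p.1) := rfl

/-- The permutation of `Fin n` rotating each of the `m` consecutive blocks of length `k` that start
at `s`, and fixing all other points. -/
noncomputable def blockRotation (h : s + m * k ≤ n) : Perm (Fin n) :=
  viaEmbedding (prodCongr (Equiv.refl (Fin m)) (finRotate k)) (blockEmbedding h)

theorem orderOf_blockRotation (h : s + m * k ≤ n) (hk : 0 < k) (hm : 0 < m) :
    orderOf (blockRotation h) = k := by
  have : Nonempty (Fin m) := ⟨⟨0, hm⟩⟩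
  rw [blockRotation, ← viaEmbeddingHom_apply,
    orderOf_injective _ (viaEmbeddingHom_injective _), orderOf_prodCongr_refl, orderOf_finRotate hk]

theorem blockRotation_apply_of_lt (h : s + m * k ≤ n) {x : Fin n} (hx : x < s) :
    blockRotation h x = x := by
  refine viaEmbedding_apply_of_notMem _ _ _ ?_
  rintro ⟨p, rfl⟩
  rw [val_blockEmbedding] at hx
  lia

theorem blockRotation_apply_of_predInSameBlock (h : s + m * k ≤ n) {x y : Fin n}
    (hxy : (x : ℕ) + 1 = y) (hy : PredInSameBlock k s m y) : blockRotation h x = y := by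
  obtain ⟨hsy, hym, hdvd⟩ := hy
  have hk : 0 < k := Nat.pos_of_mul_pos_left (a := m) (by lia)
  obtain ⟨i, j, hi, hj, hx⟩ : ∃ i j, i < m ∧ j < k ∧ (x : ℕ) = s + (j + k * i) :=
    ⟨(x - s) / k, (x - s) % k, (Nat.div_lt_iff_lt_mul hk).mpr (by lia), Nat.mod_lt _ hk, by
      rw [Nat.mod_add_div]; lia⟩
  have hj' : j + 1 < k := by
    refine lt_of_le_of_ne hj fun hjk ↦ hdvd ⟨i + 1, ?_⟩
    rw [mul_add]
    lia
  have hx_eq : x = blockEmbedding h (⟨i, hi⟩, ⟨j, hj⟩) := Fin.ext hx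
  have hy_eq : y = blockEmbedding h (⟨i, hi⟩, ⟨j + 1, hj'⟩) := by
    ext
    rw [val_blockEmbedding]
    lia
  rw [hx_eq, hy_eq, blockRotation, viaEmbedding_apply]
  obtain ⟨k, rfl⟩ : ∃ l, k = l + 1 := ⟨k - 1, by lia⟩
  exact congrArg _ (Prod.ext rfl (finRotate_of_lt (Nat.lt_of_succ_lt_succ hj')))

end BlockRotation

theorem isPretransitive_of_succ_mem_orbit {G : Type*} [Group G] {n : ℕ} [MulAction G (Fin n)]
    (h : ∀ x y : Fin n, (x : ℕ) + 1 = y → y ∈ orbit G x) : IsPretransitive G (Fin n) := by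
  obtain rfl | n := n
  · exact ⟨fun x ↦ x.elim0⟩
  rw [isPretransitive_iff_orbit_eq_univ 0]
  refine Set.eq_univ_of_forall fun x ↦ ?_
  induction x using Fin.induction with
  | zero => exact mem_orbit_self 0
  | succ x ih => exact orbit_eq_iff.mpr ih ▸ h x.castSucc x.succ (by simp)

theorem isPretransitive_closure_blockRotation {k₁ s₁ m₁ k₂ s₂ m₂ n : ℕ} (h₁ : s₁ + m₁ * k₁ ≤ n)
    (h₂ : s₂ + m₂ * k₂ ≤ n)
    (hcover : ∀ t, 0 < t → t < n → PredInSameBlock k₁ s₁ m₁ t ∨ PredInSameBlock k₂ s₂ m₂ t) :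
    IsPretransitive (closure {blockRotation h₁, blockRotation h₂}) (Fin n) := by
  refine isPretransitive_of_succ_mem_orbit fun x y hxy ↦ ?_
  rcases hcover y (by lia) y.2 with hy | hy
  · exact ⟨⟨blockRotation h₁, subset_closure (by simp)⟩,
      blockRotation_apply_of_predInSameBlock h₁ hxy hy⟩
  · exact ⟨⟨blockRotation h₂, subset_closure (by simp)⟩,
      blockRotation_apply_of_predInSameBlock h₂ hxy hy⟩

section Offset

variable {k n t : ℕ}

theorem predInSameBlock_zero_of_lt {m : ℕ} (hm : 0 < m) (ht₀ : 0 < t) (ht : t < k) :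
    PredInSameBlock k 0 m t :=
  ⟨ht₀, by have := Nat.le_mul_of_pos_left k hm; lia, Nat.not_dvd_of_pos_of_lt ht₀ ht⟩

theorem predInSameBlock_zero_or_one_of_dvd (hk : 2 ≤ k) (hdvd : k ∣ n) (ht₀ : 0 < t)
    (htn : t < n) : PredInSameBlock k 0 (n / k) t ∨ PredInSameBlock k 1 (n / k - 1) t := by
  have hn_eq : n / k * k = n := Nat.div_mul_cancel hdvd
  by_cases ht : k ∣ t
  · have hkt : k ≤ t := Nat.le_of_dvd ht₀ ht
    have htn' : k ≤ n - t := Nat.le_of_dvd (by lia) (Nat.dvd_sub hdvd ht)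
    refine .inr ⟨by lia, by rw [Nat.sub_one_mul]; lia, fun ht' ↦ ?_⟩
    have : k ∣ t - (t - 1) := Nat.dvd_sub ht ht'
    exact Nat.not_dvd_of_pos_of_lt (by lia) (by lia) this
  · exact .inl ⟨ht₀, by lia, ht⟩

theorem predInSameBlock_zero_or_mod_of_not_dvd (hk : 0 < k) (hn : k ≤ n) (hdvd : ¬ k ∣ n)
    (ht₀ : 0 < t) (htn : t < n) :
    PredInSameBlock k 0 (n / k) t ∨ PredInSameBlock k (n % k) (n / k) t := by
  have hr₀ : 0 < n % k := Nat.pos_of_ne_zero fun h ↦ hdvd (Nat.dvd_of_mod_eq_zero h)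
  have hr : n % k < k := Nat.mod_lt n hk
  have hn_eq : n % k + n / k * k = n := Nat.mod_add_div' n k
  refine or_iff_not_imp_left.mpr fun ht ↦ ?_
  have hkt : k ≤ t := by
    by_contra! h
    exact ht (predInSameBlock_zero_of_lt (Nat.div_pos hn hk) ht₀ h)
  refine ⟨by lia, by lia, fun hts ↦ ht ⟨ht₀, ?_, fun htk ↦ ?_⟩⟩
  · have : k ∣ n / k * k - (t - n % k) := Nat.dvd_sub (Nat.dvd_mul_left k _) hts
    have := Nat.le_of_dvd (by lia) this
    lia
  · have : k ∣ t - (t - n % k) := Nat.dvd_sub htk hts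
    exact Nat.not_dvd_of_pos_of_lt (by lia) (by lia) this

theorem exists_block_offset (hk : 2 ≤ k) (hn : k ≤ n) :
    ∃ s m, 0 < m ∧ s + m * k ≤ n ∧
      ∀ t, 0 < t → t < n → PredInSameBlock k 0 (n / k) t ∨ PredInSameBlock k s m t := by
  have hq : 0 < n / k := Nat.div_pos hn (by lia)
  by_cases hdvd : k ∣ n
  · obtain rfl | hkn := hn.eq_or_lt
    · exact ⟨0, 1, one_pos, by lia, fun t ht₀ htk ↦ .inl (predInSameBlock_zero_of_lt hq ht₀ htk)⟩
    · have hn_eq : n / k * k = n := Nat.div_mul_cancel hdvd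
      have hq₁ : 1 < n / k := Nat.lt_of_mul_lt_mul_right (a := k) (by lia)
      exact ⟨1, n / k - 1, by lia, by rw [Nat.sub_one_mul]; lia,
        fun _ ↦ predInSameBlock_zero_or_one_of_dvd hk hdvd⟩
  · exact ⟨n % k, n / k, hq, (Nat.mod_add_div' n k).le,
      fun _ ↦ predInSameBlock_zero_or_mod_of_not_dvd (by lia) hn hdvd⟩

end Offset

theorem exists_isPretransitive_closure_pair {k n : ℕ} (hk : 3 ≤ k) (hn : k ≤ n) :
    ∃ (f g : Perm (Fin n)) (a : Fin n), orderOf f = k ∧ orderOf g = k ∧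
      IsPretransitive (closure {f, g}) (Fin n) ∧
      f a ≠ a ∧ f (f a) ≠ a ∧ (g a = a ∨ g a = f a) := by
  have hk₀ : 0 < k := by lia
  have hq : 0 < n / k := Nat.div_pos hn hk₀
  have hqn : 0 + n / k * k ≤ n := by rw [zero_add]; exact Nat.div_mul_le_self n k
  obtain ⟨s, m, hm, hsm, hcover⟩ := exists_block_offset (by lia) hn
  have f_apply {x y : Fin n} (hxy : (x : ℕ) + 1 = y) (hy : y < k) : blockRotation hqn x = y :=
    blockRotation_apply_of_predInSameBlock hqn hxy (predInSameBlock_zero_of_lt hq (by lia) hy)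
  have f_zero : blockRotation hqn ⟨0, by lia⟩ = ⟨1, by lia⟩ := f_apply rfl (by lia)
  have f_one : blockRotation hqn ⟨1, by lia⟩ = ⟨2, by lia⟩ := f_apply rfl (by lia)
  refine ⟨blockRotation hqn, blockRotation hsm, ⟨0, by lia⟩, orderOf_blockRotation hqn hk₀ hq,
    orderOf_blockRotation hsm hk₀ hm, isPretransitive_closure_blockRotation hqn hsm hcover,
    by simp [f_zero], by simp [f_zero, f_one], ?_⟩
  obtain rfl | hs := s.eq_zero_or_pos
  · rw [f_zero]
    exact .inr (blockRotation_apply_of_predInSameBlock hsm rfl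
      (predInSameBlock_zero_of_lt hm one_pos (by lia)))
  · exact .inl (blockRotation_apply_of_lt hsm hs)

/-- For any odd `k ≥ 3` and `n ≥ k`, the alternating group on `n` symbols is
generated by three elements of order exactly `k`. -/
theorem alternating_group_generated_by_three_elements_of_odd_order
    (k n : ℕ) (hk : 3 ≤ k) (hko : Odd k) (hn : k ≤ n) :
    ∃ σ₁ σ₂ σ₃ : alternatingGroup (Fin n),
      orderOf σ₁ = k ∧ orderOf σ₂ = k ∧ orderOf σ₃ = k ∧
      Subgroup.closure {σ₁, σ₂, σ₃} = ⊤ := by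
  obtain ⟨f, g, a, hf, hg, htrans, hfa, hffa, hga⟩ := exists_isPretransitive_closure_pair hk hn
  have he : orderOf (MulAut.conj (swap a (f a)) f) = k := by rw [MulEquiv.orderOf_eq, hf]
  have even_of_orderOf {σ : Perm (Fin n)} (hσ : orderOf σ = k) : σ ∈ alternatingGroup (Fin n) :=
    mem_alternatingGroup_of_odd_orderOf (hσ ▸ hko)
  refine ⟨⟨f, even_of_orderOf hf⟩, ⟨_, even_of_orderOf he⟩, ⟨g, even_of_orderOf hg⟩,
    by rwa [orderOf_mk], by rwa [orderOf_mk], by rwa [orderOf_mk],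
    closure_eq_top_of_le_closure_image ?_⟩
  simpa only [Set.image_insert_eq, Set.image_singleton, subtype_apply] using
    alternatingGroup_le_closure_conj_swap hfa hffa hga
end
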